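/- arXiv:1510.04486 — 2 statements merged into one kernel-verified Lean document; each statement's English description precedes it below -/
import Mathlib

section
/- Let b, c, d be nonnegative integers and let N be the number of functions f : {0,...,b-1} × {0,...,c-1} → {0,1,...,d} that are weakly decreasing in each coordinate (i.e., f(i,j) ≥ f(i',j') whenever i ≤ i' and j ≤ j'); equivalently, N is the number of plane partitions contained in a b × c × d box, which equals the number of lozenge tilings of a hexagon with side lengths b,c,d,b,c,d. Then N · H(b+c) · H(b+d) · H(c+d) = H(b) · H(c) · H(d) · H(b+c+d). -/
/-- The hyperfactorial `H(n) = 0!·1!·⋯·(n-1)!`, with `H(0) = 1`. -/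
def hyperfactorial (n : ℕ) : ℕ := ∏ m ∈ Finset.range n, Nat.factorial m


/-- strict Gelfand-Tsetlin patterns with top row `x` -/
def GTP (n : ℕ) (x : Fin n → ℕ) (a : ∀ k : ℕ, Fin k → ℕ) : Prop :=
  (∀ k, n < k → a k = 0) ∧ a n = x ∧
    ∀ k, k < n → ∀ i : Fin k, a (k+1) i.castSucc ≤ a k i ∧ a k i < a (k+1) i.succ

lemma sum_Ico_choose_col (u v j : ℕ) (h : u ≤ v) :
    ∑ y ∈ Finset.Ico u v, ((y.choose j : ℕ) : ℤ) = (v.choose (j+1) : ℤ) - (u.choose (j+1) : ℤ) := by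
  induction v, h using Nat.le_induction with
  | base => simp
  | succ v h ih =>
    rw [Finset.sum_Ico_succ_top h, ih, Nat.choose_succ_succ]
    push_cast; ring

lemma det_step (n : ℕ) (x : Fin (n+1) → ℕ) (hx : Monotone x) :
    ∑ y ∈ Fintype.piFinset (fun i : Fin n => Finset.Ico (x i.castSucc) (x i.succ)),
      (Matrix.of fun i j : Fin n => (((y i).choose j : ℕ) : ℤ)).det
    = (Matrix.of fun i j : Fin (n+1) => (((x i).choose j : ℕ) : ℤ)).det := by
  have h1 := (Matrix.detRowAlternating (R := ℤ) (n := Fin n)).toMultilinearMap.map_sum_finset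
    (fun (_ : Fin n) (y : ℕ) (j : Fin n) => ((y.choose j : ℕ) : ℤ))
    (fun i : Fin n => Finset.Ico (x i.castSucc) (x i.succ))
  have h2 : ∑ y ∈ Fintype.piFinset (fun i : Fin n => Finset.Ico (x i.castSucc) (x i.succ)),
      (Matrix.of fun i j : Fin n => (((y i).choose j : ℕ) : ℤ)).det =
      (Matrix.of fun i j : Fin n =>
        (((x i.succ).choose (j+1) : ℤ) - ((x i.castSucc).choose (j+1) : ℤ))).det := by
    refine Eq.trans h1.symm ?_
    change Matrix.det _ = _
    congr 1
    ext i j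
    simp only [Finset.sum_apply, Matrix.of_apply]
    exact sum_Ico_choose_col _ _ _ (hx (Fin.castSucc_lt_succ).le)
  rw [h2]
  symm
  rw [Matrix.det_eq_of_forall_row_eq_smul_add_pred (B := Matrix.of fun i j : Fin (n+1) =>
    (Fin.cases (((x 0).choose j : ℕ) : ℤ)
      (fun i : Fin n => ((x i.succ).choose j : ℤ) - ((x i.castSucc).choose j : ℤ)) i : ℤ)) (fun _ => 1)]
  · rw [Matrix.det_succ_column_zero, Fin.sum_univ_succ]
    simp
    rfl
  · intro j; simp
  · intro i j; simp

lemma GTP_card (n : ℕ) : ∀ x : Fin n → ℕ, Monotone x →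
    ∃ s : Finset (∀ k : ℕ, Fin k → ℕ), (∀ a, a ∈ s ↔ GTP n x a) ∧
      (s.card : ℤ) = (Matrix.of fun i j : Fin n => (((x i).choose j : ℕ) : ℤ)).det := by
  classical
  induction n with
  | zero =>
    intro x _
    refine ⟨{fun _ => 0}, ?_, by simp⟩
    intro a
    rw [Finset.mem_singleton]
    constructor
    · rintro rfl
      exact ⟨fun _ _ => rfl, Subsingleton.elim _ _, fun k hk => absurd hk (by omega)⟩
    · rintro ⟨h, -, -⟩
      funext k
      rcases Nat.eq_zero_or_pos k with rfl | hk
      · exact Subsingleton.elim _ _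
      · exact h k hk
  | succ n ih =>
    intro x hx
    set T := Fintype.piFinset (fun i : Fin n => Finset.Ico (x i.castSucc) (x i.succ)) with hT
    have hT' : ∀ y ∈ T, Monotone y := by
      intro y hy
      simp only [hT, Fintype.mem_piFinset, Finset.mem_Ico] at hy
      intro i j hij
      rcases hij.eq_or_lt with rfl | hij
      · exact le_rfl
      · have h1 := (hy i).2
        have h2 := (hy j).1
        have h3 : x i.succ ≤ x j.castSucc := hx (by
          rw [Fin.le_def]; simp; exact hij)
        omega
    have ih' : ∀ y : Fin n → ℕ, ∃ s : Finset (∀ k : ℕ, Fin k → ℕ), y ∈ T → (∀ a, a ∈ s ↔ GTP n y a) ∧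
      (s.card : ℤ) = (Matrix.of fun i j : Fin n => (((y i).choose j : ℕ) : ℤ)).det := by
      intro y
      by_cases hy : y ∈ T
      · obtain ⟨s, hs⟩ := ih y (hT' y hy)
        exact ⟨s, fun _ => hs⟩
      · exact ⟨∅, fun h => absurd h hy⟩
    choose s hs using ih'
    refine ⟨T.biUnion (fun y => (s y).image (fun a => Function.update a (n+1) x)), ?_, ?_⟩
    · intro a
      simp only [Finset.mem_biUnion, Finset.mem_image]
      constructor
      · rintro ⟨y, hy, a, ha, rfl⟩
        rw [(hs y hy).1] at ha
        obtain ⟨h1, h2, h3⟩ := ha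
        simp only [hT, Fintype.mem_piFinset, Finset.mem_Ico] at hy
        refine ⟨?_, by simp, ?_⟩
        · intro k hk
          rw [Function.update_of_ne (by omega)]
          exact h1 k (by omega)
        · intro k hk i
          rw [Function.update_of_ne (by omega : k ≠ n+1)]
          rcases Nat.lt_succ_iff_lt_or_eq.mp hk with hk | rfl
          · rw [Function.update_of_ne (by omega : k+1 ≠ n+1)]
            exact h3 k hk i
          · rw [Function.update_self, h2]
            exact hy i
      · rintro ⟨h1, h2, h3⟩
        have hy : a n ∈ T := by
          simp only [hT, Fintype.mem_piFinset, Finset.mem_Ico]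
          intro i
          rw [← h2]
          exact h3 n (by omega) i
        refine ⟨a n, hy, Function.update a (n+1) 0, ?_, ?_⟩
        · rw [(hs _ hy).1]
          refine ⟨?_, by rw [Function.update_of_ne (by omega)], ?_⟩
          · intro k hk
            rcases eq_or_ne k (n+1) with rfl | h
            · simp
            · rw [Function.update_of_ne h]
              exact h1 k (by omega)
          · intro k hk i
            rw [Function.update_of_ne (by omega : k+1 ≠ n+1), Function.update_of_ne (by omega : k ≠ n+1)]
            exact h3 k (by omega) i
        · rw [Function.update_idem, ← h2, Function.update_eq_self]
    · rw [Finset.card_biUnion, Nat.cast_sum, ← det_step n x hx]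
      · refine Finset.sum_congr rfl fun y hy => ?_
        rw [← (hs y hy).2, Finset.card_image_of_injOn]
        intro a ha a' ha' h
        rw [Finset.mem_coe, (hs y hy).1] at ha ha'
        funext k
        rcases eq_or_ne k (n+1) with rfl | hk
        · rw [ha.1 _ (by omega), ha'.1 _ (by omega)]
        · have := congrFun h k
          simpa [Function.update_of_ne hk] using this
      · intro y hy z hz hyz
        rw [Function.onFun, Finset.disjoint_left]
        intro a ha ha'
        rw [Finset.mem_image] at ha ha'
        obtain ⟨p, hp, rfl⟩ := ha
        obtain ⟨q, hq, hpq⟩ := ha'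
        rw [(hs y hy).1] at hp
        rw [(hs z hz).1] at hq
        apply hyz
        rw [← hp.2.1, ← hq.2.1]
        have := congrFun hpq n
        rw [Function.update_of_ne (by omega), Function.update_of_ne (by omega)] at this
        exact this.symm

lemma det_choose_mul (n : ℕ) (x : ℕ → ℕ) :
    (Matrix.of fun i j : Fin n => (((x i).choose j : ℕ) : ℤ)).det * (hyperfactorial n : ℤ) =
      ∏ j ∈ Finset.range n, ∏ i ∈ Finset.range j, ((x j : ℤ) - x i) := by
  have h := Matrix.det_eval_matrixOfPolynomials_eq_det_vandermonde (fun i : Fin n ↦ ((x i : ℕ) : ℤ))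
      (fun i => descPochhammer ℤ i)
      (fun i => descPochhammer_natDegree ℤ i)
      (fun i => monic_descPochhammer ℤ i)
  have h2 : (Matrix.of fun i j : Fin n => (descPochhammer ℤ j).eval ((x i : ℕ) : ℤ)) =
      Matrix.of fun i j : Fin n => (((j : ℕ).factorial : ℕ) : ℤ) *
        (Matrix.of fun i j : Fin n => (((x i).choose j : ℕ) : ℤ)) i j := by
    ext i j
    simp only [Matrix.of_apply]
    rw [descPochhammer_eval_eq_descFactorial, Nat.descFactorial_eq_factorial_mul_choose]
    push_cast; ring
  rw [h2, Matrix.det_mul_row, Matrix.det_vandermonde] at h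
  rw [hyperfactorial, mul_comm, Nat.cast_prod,
    ← Fin.prod_univ_eq_prod_range (fun i => ((i.factorial : ℕ) : ℤ)) n, ← h]
  clear h h2
  induction n with
  | zero => simp
  | succ n ih =>
    rw [Finset.prod_range_succ, ← ih, Fin.prod_univ_castSucc]
    have h0 : Finset.Ioi (Fin.last n) = ∅ := by
      ext i; simp [Fin.le_last]
    have h1 : ∀ i : Fin n, Finset.Ioi i.castSucc =
        insert (Fin.last n) ((Finset.Ioi i).map Fin.castSuccEmb) := by
      intro i
      ext j
      refine Fin.lastCases ?_ (fun j => ?_) j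
      · simp [Fin.castSucc_lt_last]
      · simp [Fin.le_last]
    have h2 : ∀ i : Fin n, Fin.last n ∉ ((Finset.Ioi i).map Fin.castSuccEmb) := by
      intro i
      simp
    simp only [h0, h1, Finset.prod_empty, mul_one]
    simp only [Finset.prod_insert (h2 _), Finset.prod_map, Fin.coe_castSuccEmb, Fin.val_castSucc,
      Fin.val_last, Finset.prod_mul_distrib]
    rw [Fin.prod_univ_eq_prod_range (fun i => (x n : ℤ) - x i) n, mul_comm]

lemma prod_range_sub_fact (n e : ℕ) :
    (∏ i ∈ Finset.range n, (((e + n : ℕ) : ℤ) - i)) * (e.factorial : ℤ) = ((e + n).factorial : ℤ) := by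
  induction n with
  | zero => simp
  | succ n ih =>
    rw [Finset.prod_range_succ']
    have : ∀ k ∈ Finset.range n, (((e + (n+1) : ℕ) : ℤ) - ((k+1 : ℕ) : ℤ)) = ((e + n : ℕ) : ℤ) - k := by
      intro k _; push_cast; ring
    rw [Finset.prod_congr rfl this, mul_right_comm, ih, ← add_assoc, Nat.factorial_succ]
    push_cast; ring

lemma hyper_succ (n : ℕ) : hyperfactorial (n+1) = hyperfactorial n * n.factorial := by
  rw [hyperfactorial, Finset.prod_range_succ]; rfl

lemma vprod (b c d : ℕ) :
    (∏ j ∈ Finset.range (b + c), ∏ i ∈ Finset.range j,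
      (((if j < c then j else d + j : ℕ) : ℤ) - ((if i < c then i else d + i : ℕ) : ℤ))) *
      (hyperfactorial (b + d) : ℤ) * hyperfactorial (c + d) =
    hyperfactorial b * hyperfactorial c * hyperfactorial d * hyperfactorial (b + c + d) := by
  induction b with
  | zero =>
    have h1 : (∏ j ∈ Finset.range (0 + c), ∏ i ∈ Finset.range j,
      (((if j < c then j else d + j : ℕ) : ℤ) - ((if i < c then i else d + i : ℕ) : ℤ))) =
        (hyperfactorial c : ℤ) := by
      rw [hyperfactorial, Nat.cast_prod, zero_add]
      refine Finset.prod_congr rfl fun j hj => ?_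
      rw [Finset.mem_range] at hj
      have := prod_range_sub_fact j 0
      simp only [Nat.factorial_zero, Nat.cast_one, mul_one, zero_add] at this
      rw [← this]
      refine Finset.prod_congr rfl fun i hi => ?_
      rw [Finset.mem_range] at hi
      rw [if_pos hj, if_pos (by omega)]
    rw [h1]
    simp [hyperfactorial]
  | succ b ih =>
    have e1 : b + 1 + c = (b + c) + 1 := by ring
    have e2 : b + 1 + d = (b + d) + 1 := by ring
    have e3 : b + 1 + c + d = (b + c + d) + 1 := by ring
    rw [e1, e2, ← e1, e3, e1, hyper_succ, hyper_succ, hyper_succ, Finset.prod_range_succ]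
    have key : (∏ i ∈ Finset.range (b + c),
      (((if b + c < c then b + c else d + (b + c) : ℕ) : ℤ) - ((if i < c then i else d + i : ℕ) : ℤ)))
        * ((b+d).factorial : ℤ) = b.factorial * ((b + c + d).factorial : ℤ) := by
      rw [add_comm b c, Finset.prod_range_add]
      have h1 : ∀ i ∈ Finset.range c, (((if c + b < c then c + b else d + (c + b) : ℕ) : ℤ) -
          ((if i < c then i else d + i : ℕ) : ℤ)) = (((b + d) + c : ℕ) : ℤ) - i := by
        intro i hi
        rw [Finset.mem_range] at hi
        rw [if_neg (by omega), if_pos hi]; push_cast; ring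
      have h2 : ∀ i ∈ Finset.range b, (((if c + b < c then c + b else d + (c + b) : ℕ) : ℤ) -
          ((if c + i < c then c + i else d + (c + i) : ℕ) : ℤ)) = ((0 + b : ℕ) : ℤ) - i := by
        intro i hi
        rw [if_neg (by omega), if_neg (by omega)]; push_cast; ring
      rw [Finset.prod_congr rfl h1, Finset.prod_congr rfl h2]
      have h3 := prod_range_sub_fact c (b+d)
      have h4 := prod_range_sub_fact b 0
      simp only [Nat.factorial_zero, Nat.cast_one, mul_one] at h4
      rw [h4, mul_right_comm, h3, zero_add, show b + d + c = c + b + d by ring]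
      ring
    push_cast at ih key ⊢
    linear_combination (b.factorial * ((b + c + d).factorial : ℤ)) * ih + (∏ j ∈ Finset.range (b + c), ∏ i ∈ Finset.range j,
      ((if j < c then (j : ℤ) else d + j) - (if i < c then (i : ℤ) else d + i))) * hyperfactorial (b + d) * hyperfactorial (c + d) * key

lemma card_bij (b c d : ℕ) :
    Nat.card {f : Fin b × Fin c → Fin (d + 1) //
        ∀ p q : Fin b × Fin c, p.1 ≤ q.1 → p.2 ≤ q.2 → f q ≤ f p} =
    Nat.card {a // GTP (b + c) (fun i => if (i : ℕ) < c then (i : ℕ) else d + i) a} := by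
  classical
  let g : (Fin b × Fin c → Fin (d + 1)) → ℕ → ℕ → ℕ := fun f p q =>
    if h : p < b ∧ q < c then (f (⟨p, h.1⟩, ⟨q, h.2⟩) : ℕ) else 0
  have hg1 : ∀ f p q, g f p q ≤ d := by
    intro f p q
    simp only [g]
    split_ifs with h
    · have := (f (⟨p, h.1⟩, ⟨q, h.2⟩)).2
      omega
    · omega
  have hg2 : ∀ f : Fin b × Fin c → Fin (d + 1),
      (∀ p q : Fin b × Fin c, p.1 ≤ q.1 → p.2 ≤ q.2 → f q ≤ f p) →
      ∀ p q p' q', p ≤ p' → q ≤ q' → g f p' q' ≤ g f p q := by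
    intro f hf p q p' q' hp hq
    simp only [g]
    by_cases h : p' < b ∧ q' < c
    · rw [dif_pos h, dif_pos ⟨by omega, by omega⟩]
      exact hf _ _ hp hq
    · rw [dif_neg h]; omega
  let m : (Fin b × Fin c → Fin (d + 1)) → ℕ → ℕ → ℕ := fun f k i =>
    if c ≤ i then d else if b ≤ k - 1 - i then 0 else g f (k - 1 - i) (c - 1 - i)
  let Φ : (Fin b × Fin c → Fin (d + 1)) → ∀ k : ℕ, Fin k → ℕ := fun f k i =>
    if b + c < k then 0 else i + m f k i
  have hΦ : ∀ f : Fin b × Fin c → Fin (d + 1),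
      (∀ p q : Fin b × Fin c, p.1 ≤ q.1 → p.2 ≤ q.2 → f q ≤ f p) →
      GTP (b + c) (fun i => if (i : ℕ) < c then (i : ℕ) else d + i) (Φ f) := by
    intro f hf
    refine ⟨?_, ?_, ?_⟩
    · intro k hk
      funext i
      simp [Φ, hk]
    · funext i
      simp only [Φ, m]
      have := i.2
      split_ifs <;> omega
    · intro k hk i
      have hi := i.2
      simp only [Φ, m, Fin.val_castSucc, Fin.val_succ]
      rw [if_neg (by omega : ¬ b + c < k + 1), if_neg (by omega : ¬ b + c < k)]
      have e1 := hg1 f (k - 1 - i) (c - 1 - i)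
      have e2 := hg2 f hf (k - 1 - i) (c - 1 - i) (k + 1 - 1 - i) (c - 1 - i) (by omega) le_rfl
      have e3 := hg2 f hf (k + 1 - 1 - (i + 1)) (c - 1 - (i + 1)) (k - 1 - i) (c - 1 - i) (by omega) (by omega)
      constructor <;> split_ifs <;> omega
  refine Nat.card_eq_of_bijective (fun f => ⟨Φ f.1, hΦ f.1 f.2⟩) ⟨?_, ?_⟩
  · rintro ⟨f, hf⟩ ⟨f', hf'⟩ h
    apply Subtype.ext
    funext ⟨p, q⟩
    have h := congrArg Subtype.val h
    have hp := p.2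
    have hq := q.2
    have h := congrFun (congrFun h (p + (c - 1 - q) + 1)) ⟨c - 1 - q, by omega⟩
    simp only [Φ, m] at h
    rw [if_neg (by omega), if_neg (by omega), if_neg (by omega), if_neg (by omega), if_neg (by omega),
      if_neg (by omega)] at h
    have e1 : (p : ℕ) + (c - 1 - q) + 1 - 1 - (c - 1 - q) = p := by omega
    have e2 : c - 1 - (c - 1 - (q : ℕ)) = q := by omega
    rw [e1, e2] at h
    simp only [g] at h
    rw [dif_pos ⟨hp, hq⟩, dif_pos ⟨hp, hq⟩] at h
    apply Fin.ext
    simpa using h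
  · rintro ⟨a, h1, h2, h3⟩
    let B : ℕ → ℕ → ℕ := fun k i => if h : i < k then a k ⟨i, h⟩ else 0
    have hB : ∀ k (i : Fin k), a k i = B k i := by
      intro k i; simp [B]
    have hBn1 : ∀ i, i < c → i < b + c → B (b + c) i = i := by
      intro i hi hi'
      simp only [B]; rw [dif_pos hi', h2]; simp [hi]
    have hBn2 : ∀ i, c ≤ i → i < b + c → B (b + c) i = d + i := by
      intro i hi hi'
      simp only [B]; rw [dif_pos hi', h2]
      exact if_neg (by simpa using hi)
    have hB1 : ∀ k i, i < k → k < b + c → B (k+1) i ≤ B k i := by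
      intro k i hi hk
      have := (h3 k hk ⟨i, hi⟩).1
      rw [hB, hB] at this
      exact this
    have hB2 : ∀ k i, i < k → k < b + c → B k i + 1 ≤ B (k+1) (i+1) := by
      intro k i hi hk
      have := (h3 k hk ⟨i, hi⟩).2
      rw [hB, hB] at this
      exact this
    have hC1 : ∀ s k i, i < k → k + s ≤ b + c → B (k+s) i ≤ B k i := by
      intro s
      induction s with
      | zero => intro k i _ _; exact le_rfl
      | succ s ih =>
        intro k i hi hk
        exact (hB1 (k+s) i (by omega) (by omega)).trans (ih k i hi (by omega))
    have hC2 : ∀ s k i, i < k → k + s ≤ b + c → B k i + s ≤ B (k+s) (i+s) := by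
      intro s
      induction s with
      | zero => intro k i _ _; exact le_rfl
      | succ s ih =>
        intro k i hi hk
        have := hB2 (k+s) (i+s) (by omega) (by omega)
        have := ih k i hi (by omega)
        rw [show k + (s + 1) = k + s + 1 by omega, show i + (s + 1) = i + s + 1 by omega]
        omega
    -- lower bound
    have hlow : ∀ k i, i < k → k ≤ b + c → i ≤ B k i := by
      intro k i hi hk
      have h := hC1 (b + c - k) k i hi (by omega)
      rw [show k + (b + c - k) = b + c by omega] at h
      rcases lt_or_ge i c with hc | hc
      · rw [hBn1 i hc (by omega)] at h; exact h
      · rw [hBn2 i hc (by omega)] at h; omega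
    have hup : ∀ k i, i < k → k ≤ b + c → B k i ≤ d + i := by
      intro k i hi hk
      have h := hC2 (b + c - k) k i hi (by omega)
      rw [show k + (b + c - k) = b + c by omega] at h
      rcases lt_or_ge (i + (b + c - k)) c with hc | hc
      · rw [hBn1 _ hc (by omega)] at h; omega
      · rw [hBn2 _ hc (by omega)] at h; omega
    have hd : ∀ k i, i < k → k ≤ b + c → c ≤ i → B k i = d + i := by
      intro k i hi hk hci
      apply le_antisymm (hup k i hi hk)
      have h := hC1 (b + c - k) k i hi (by omega)
      rw [show k + (b + c - k) = b + c by omega, hBn2 i hci (by omega)] at h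
      exact h
    have hz : ∀ k i, i < k → k ≤ b + c → b ≤ k - 1 - i → B k i = i := by
      intro k i hi hk hbi
      refine le_antisymm ?_ (hlow k i hi hk)
      have h := hC2 (b + c - k) k i hi (by omega)
      rw [show k + (b + c - k) = b + c by omega, hBn1 _ (by omega) (by omega)] at h
      omega
    let f : Fin b × Fin c → Fin (d + 1) := fun p =>
      ⟨B (p.1 + (c - 1 - p.2) + 1) (c - 1 - p.2) - (c - 1 - p.2), by
        have := hup (p.1 + (c - 1 - p.2) + 1) (c - 1 - p.2) (by omega) (by omega)
        omega⟩
    have hf : ∀ p q : Fin b × Fin c, p.1 ≤ q.1 → p.2 ≤ q.2 → f q ≤ f p := by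
      rintro ⟨p, q⟩ ⟨p', q'⟩ hp hq
      simp only at hp hq
      rw [Fin.le_def] at hp hq ⊢
      simp only [f]
      have hq2 := q'.2
      have hp2 := p'.2
      have e1 := hC1 (p' - p) (p + (c - 1 - q') + 1) (c - 1 - q') (by omega) (by omega)
      rw [show (p : ℕ) + (c - 1 - q') + 1 + (p' - p) = p' + (c - 1 - q') + 1 by omega] at e1
      have e2 := hC2 (q' - q) (p + (c - 1 - q') + 1) (c - 1 - q') (by omega) (by omega)
      rw [show (p : ℕ) + (c - 1 - q') + 1 + (q' - q) = p + (c - 1 - q) + 1 by omega,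
        show c - 1 - (q' : ℕ) + (q' - q) = c - 1 - q by omega] at e2
      omega
    refine ⟨⟨f, hf⟩, Subtype.ext ?_⟩
    funext k i
    have hi := i.2
    simp only [Φ, m]
    split_ifs with hk hc hb
    · rw [h1 k hk]; rfl
    · rw [hB, hd k i hi (by omega) hc]; omega
    · rw [hB, hz k i hi (by omega) hb]; omega
    · simp only [g]
      rw [dif_pos ⟨by omega, by omega⟩]
      simp only [f]
      have e0 : c - 1 - (c - 1 - (i : ℕ)) = i := by omega
      have e1 : k - 1 - (i : ℕ) + i + 1 = k := by omega
      rw [e0, e1, hB]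
      have := hlow k i hi (by omega)
      omega

/-- MacMahon's boxed plane partition theorem:
the number `N` of functions `f : {0,…,b-1} × {0,…,c-1} → {0,…,d}` that are weakly
decreasing in each coordinate satisfies
`N · H(b+c) · H(b+d) · H(c+d) = H(b) · H(c) · H(d) · H(b+c+d)`. -/
theorem stmt_0 (b c d : ℕ) :
    Nat.card {f : Fin b × Fin c → Fin (d + 1) //
        ∀ p q : Fin b × Fin c, p.1 ≤ q.1 → p.2 ≤ q.2 → f q ≤ f p} *
      hyperfactorial (b + c) * hyperfactorial (b + d) * hyperfactorial (c + d) =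
    hyperfactorial b * hyperfactorial c * hyperfactorial d *
      hyperfactorial (b + c + d) := by
  have key : ((Nat.card {f : Fin b × Fin c → Fin (d + 1) //
        ∀ p q : Fin b × Fin c, p.1 ≤ q.1 → p.2 ≤ q.2 → f q ≤ f p} : ℕ) : ℤ) * hyperfactorial (b + c) =
      ∏ j ∈ Finset.range (b + c), ∏ i ∈ Finset.range j,
      (((if j < c then j else d + j : ℕ) : ℤ) - ((if i < c then i else d + i : ℕ) : ℤ)) := by
    rw [card_bij]
    obtain ⟨s, hs, hs'⟩ := GTP_card (b + c) (fun i => if (i : ℕ) < c then (i : ℕ) else d + i) (by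
      intro i j hij
      rw [Fin.le_def] at hij
      simp only
      split_ifs <;> omega)
    have hc : Nat.card {a // GTP (b + c) (fun i => if (i : ℕ) < c then (i : ℕ) else d + i) a} = s.card := by
      rw [← Nat.card_eq_finsetCard]; exact Nat.card_congr (Equiv.subtypeEquivRight fun a => (hs a).symm)
    rw [hc, hs']
    exact det_choose_mul (b + c) (fun i => if i < c then i else d + i)
  have h2 := vprod b c d
  rw [← key] at h2
  exact_mod_cast h2
end

section
/- Let G be a finite simple graph on vertex set V with a bipartition V = V₁ ∪ V₂ (every edge of G has one endpoint in V₁ and one in V₂). Let S ⊆ V and let H be the subgraph of G induced on S. Assume: (i) (Separating Condition) no edge of G joins a vertex of S ∩ V₁ to a vertex of V \ S; and (ii) |S ∩ V₁| ≥ |S ∩ V₂|. Then the number of perfect matchings of G equals the number of perfect matchings of H multiplied by the number of perfect matchings of the subgraph of G induced on V \ S. In particular, if |S ∩ V₁| > |S ∩ V₂| then G has no perfect matching. -/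
namespace SplitAux

theorem key {V : Type*} [Fintype V] (G : SimpleGraph V) (V1 : Set V)
    (hbip : ∀ u v : V, G.Adj u v → (u ∈ V1 ↔ v ∉ V1))
    (S : Set V)
    (hsep : ∀ u v : V, G.Adj u v → u ∈ S ∩ V1 → v ∈ S)
    (hcard : (S ∩ V1ᶜ).ncard ≤ (S ∩ V1).ncard)
    (M : G.Subgraph) (hM : M.IsPerfectMatching) :
    (S ∩ V1).ncard ≤ (S ∩ V1ᶜ).ncard ∧ ∀ u v, M.Adj u v → u ∈ S → v ∈ S := by
  rw [SimpleGraph.Subgraph.isPerfectMatching_iff] at hM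
  choose f hf hu using hM
  simp only at hf hu
  have hinv : ∀ u v, M.Adj u v → f v = u := fun u v h => (hu v u h.symm).symm
  have hinj : Function.Injective f := by
    intro a b hab
    have h1 := hinv a _ (hf a)
    have h2 := hinv b _ (hf b)
    rw [← h1, ← h2, hab]
  have hsub : f '' (S ∩ V1) ⊆ S ∩ V1ᶜ := by
    rintro _ ⟨u, huS, rfl⟩
    have ha := M.adj_sub (hf u)
    exact ⟨hsep _ _ ha huS, (hbip _ _ ha).1 huS.2⟩
  have hc : (f '' (S ∩ V1)).ncard = (S ∩ V1).ncard := Set.ncard_image_of_injective _ hinj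
  have heq : f '' (S ∩ V1) = S ∩ V1ᶜ :=
    Set.eq_of_subset_of_ncard_le hsub (by rw [hc]; exact hcard) (Set.toFinite _)
  refine ⟨by rw [← hc, heq], ?_⟩
  intro u v huv huS
  by_cases h1 : u ∈ V1
  · exact hsep u v (M.adj_sub huv) ⟨huS, h1⟩
  · have : u ∈ f '' (S ∩ V1) := by rw [heq]; exact ⟨huS, h1⟩
    obtain ⟨w, hw, rfl⟩ := this
    have e1 := hinv w _ (hf w)
    have e2 := hu _ _ huv
    rw [e2, e1]; exact hw.1

/-- Restriction of a subgraph of `G` to an induced subgraph. -/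
def restr {V : Type*} {G : SimpleGraph V} (M : G.Subgraph) (S : Set V) :
    (G.induce S).Subgraph where
  verts := Set.univ
  Adj u v := M.Adj u v
  adj_sub h := M.adj_sub h
  edge_vert _ := Set.mem_univ _
  symm := ⟨fun _ _ h => M.adj_symm h⟩

/-- Union of subgraphs of the two induced subgraphs. -/
def glue {V : Type*} {G : SimpleGraph V} {S : Set V} (A : (G.induce S).Subgraph)
    (B : (G.induce Sᶜ).Subgraph) : G.Subgraph where
  verts := Set.univ
  Adj u v := (∃ (hu : u ∈ S) (hv : v ∈ S), A.Adj ⟨u, hu⟩ ⟨v, hv⟩) ∨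
    (∃ (hu : u ∈ Sᶜ) (hv : v ∈ Sᶜ), B.Adj ⟨u, hu⟩ ⟨v, hv⟩)
  adj_sub := by
    rintro u v (⟨hu, hv, h⟩ | ⟨hu, hv, h⟩)
    · exact A.adj_sub h
    · exact B.adj_sub h
  edge_vert _ := Set.mem_univ _
  symm := ⟨by
    rintro u v (⟨hu, hv, h⟩ | ⟨hu, hv, h⟩)
    · exact Or.inl ⟨hv, hu, A.adj_symm h⟩
    · exact Or.inr ⟨hv, hu, B.adj_symm h⟩⟩

theorem restr_pm {V : Type*} {G : SimpleGraph V} (M : G.Subgraph) (S : Set V)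
    (hM : M.IsPerfectMatching) (h : ∀ u v, M.Adj u v → u ∈ S → v ∈ S) :
    (restr M S).IsPerfectMatching := by
  rw [SimpleGraph.Subgraph.isPerfectMatching_iff] at hM ⊢
  rintro ⟨v, hv⟩
  obtain ⟨w, hw, hu⟩ := hM v
  exact ⟨⟨w, h v w hw hv⟩, hw, fun y hy => Subtype.ext (hu y hy)⟩

theorem glue_pm {V : Type*} {G : SimpleGraph V} {S : Set V} (A : (G.induce S).Subgraph)
    (B : (G.induce Sᶜ).Subgraph) (hA : A.IsPerfectMatching) (hB : B.IsPerfectMatching) :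
    (glue A B).IsPerfectMatching := by
  rw [SimpleGraph.Subgraph.isPerfectMatching_iff] at hA hB ⊢
  intro v
  by_cases hv : v ∈ S
  · obtain ⟨w, hw, hu⟩ := hA ⟨v, hv⟩
    refine ⟨w, Or.inl ⟨hv, w.2, hw⟩, ?_⟩
    rintro y (⟨_, hy, h⟩ | ⟨hn, _, _⟩)
    · exact congrArg Subtype.val (hu ⟨y, hy⟩ h)
    · exact absurd hv hn
  · obtain ⟨w, hw, hu⟩ := hB ⟨v, hv⟩
    refine ⟨w, Or.inr ⟨hv, w.2, hw⟩, ?_⟩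
    rintro y (⟨hn, _, _⟩ | ⟨_, hy, h⟩)
    · exact absurd hn hv
    · exact congrArg Subtype.val (hu ⟨y, hy⟩ h)

theorem pm_ext {V : Type*} {G : SimpleGraph V} {M N : G.Subgraph}
    (hM : M.IsPerfectMatching) (hN : N.IsPerfectMatching)
    (h : ∀ u v, M.Adj u v ↔ N.Adj u v) : M = N := by
  apply SimpleGraph.Subgraph.ext
  · ext v; exact ⟨fun _ => hN.2 v, fun _ => hM.2 v⟩
  · ext u v; exact h u v

end SplitAux

/-- Graph Splitting Lemma: `G` is a finite simple graph with bipartition `V₁ ∪ V₁ᶜ`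
(every edge joins `V₁` to its complement).  If `S` is a vertex subset such that no
edge of `G` joins a vertex of `S ∩ V₁` to a vertex outside `S`, and
`|S ∩ V₁| ≥ |S ∩ V₁ᶜ|`, then the number of perfect matchings of `G` equals the
product of the numbers of perfect matchings of the subgraphs induced on `S` and on
`Sᶜ`.  In particular, if `|S ∩ V₁| > |S ∩ V₁ᶜ|` then `G` has no perfect matching. -/
theorem stmt_1 {V : Type*} [Fintype V] (G : SimpleGraph V) (V1 : Set V)
    (hbip : ∀ u v : V, G.Adj u v → (u ∈ V1 ↔ v ∉ V1))
    (S : Set V)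
    (hsep : ∀ u v : V, G.Adj u v → u ∈ S ∩ V1 → v ∈ S)
    (hcard : (S ∩ V1ᶜ).ncard ≤ (S ∩ V1).ncard) :
    Nat.card {M : G.Subgraph // M.IsPerfectMatching} =
        Nat.card {M : (G.induce S).Subgraph // M.IsPerfectMatching} *
          Nat.card {M : (G.induce Sᶜ).Subgraph // M.IsPerfectMatching} ∧
      ((S ∩ V1ᶜ).ncard < (S ∩ V1).ncard →
        Nat.card {M : G.Subgraph // M.IsPerfectMatching} = 0) := by
  have hkey := SplitAux.key G V1 hbip S hsep hcard
  have hkey' : ∀ M : G.Subgraph, M.IsPerfectMatching →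
      ∀ u v, M.Adj u v → u ∈ Sᶜ → v ∈ Sᶜ :=
    fun M hM u v huv hu hv => hu ((hkey M hM).2 v u huv.symm hv)
  constructor
  · rw [← Nat.card_prod]
    refine Nat.card_congr
      { toFun := fun M =>
          (⟨SplitAux.restr M.1 S, SplitAux.restr_pm _ _ M.2 (hkey M.1 M.2).2⟩,
            ⟨SplitAux.restr M.1 Sᶜ, SplitAux.restr_pm _ _ M.2 (hkey' M.1 M.2)⟩)
        invFun := fun P => ⟨SplitAux.glue P.1.1 P.2.1, SplitAux.glue_pm _ _ P.1.2 P.2.2⟩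
        left_inv := ?_
        right_inv := ?_ }
    · rintro ⟨M, hM⟩
      apply Subtype.ext
      refine SplitAux.pm_ext (SplitAux.glue_pm _ _
        (SplitAux.restr_pm _ _ hM (hkey M hM).2) (SplitAux.restr_pm _ _ hM (hkey' M hM))) hM ?_
      intro u v
      constructor
      · rintro (⟨_, _, h⟩ | ⟨_, _, h⟩) <;> exact h
      · intro h
        by_cases hu : u ∈ S
        · exact Or.inl ⟨hu, (hkey M hM).2 u v h hu, h⟩
        · exact Or.inr ⟨hu, hkey' M hM u v h hu, h⟩
    · rintro ⟨⟨A, hA⟩, ⟨B, hB⟩⟩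
      have hg := SplitAux.glue_pm A B hA hB
      refine Prod.ext (Subtype.ext ?_) (Subtype.ext ?_)
      · refine SplitAux.pm_ext (SplitAux.restr_pm _ _ hg (hkey _ hg).2) hA ?_
        rintro ⟨u, hu⟩ ⟨v, hv⟩
        constructor
        · rintro (⟨_, _, h⟩ | ⟨hn, _, _⟩)
          · exact h
          · exact absurd hu hn
        · intro h
          exact Or.inl ⟨hu, hv, h⟩
      · refine SplitAux.pm_ext (SplitAux.restr_pm _ _ hg (hkey' _ hg)) hB ?_
        rintro ⟨u, hu⟩ ⟨v, hv⟩
        constructor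
        · rintro (⟨hn, _, _⟩ | ⟨_, _, h⟩)
          · exact absurd hn hu
          · exact h
        · intro h
          exact Or.inr ⟨hu, hv, h⟩
  · intro hlt
    have : IsEmpty {M : G.Subgraph // M.IsPerfectMatching} :=
      ⟨fun M => absurd (hkey M.1 M.2).1 (not_le.2 hlt)⟩
    exact Nat.card_of_isEmpty
end
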